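/- arXiv:hep-th/9810105 — 10 statements merged into one kernel-verified Lean document; each statement's English description precedes it below -/
import Mathlib

section
/- Let N be a positive integer and let z, w : Fin N → ℂ be families of complex numbers with z i ≠ w j for all i, j. Then the determinant of the N×N matrix with entries 1/(z i − w j)^2 equals the product of the determinant of the matrix with entries 1/(z i − w j) and the permanent of that same matrix; that is, det((z i − w j)⁻²) = det((z i − w j)⁻¹) · ∑_{σ ∈ Equiv.Perm (Fin N)} ∏_{i} (z i − w (σ i))⁻¹. -/
/-!
This is Borchardt's identity, proved by induction on the size of the matrix. With
`a k = (z 0 - w k)⁻¹`, expanding along the first row gives `det = ∑ k, a k * C⁻ k` and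
`perm = ∑ k, a k * C⁺ k`, where the cofactors `C⁻ k`, `C⁺ k` do not involve `z 0`. In the product,
the diagonal terms `a k ^ 2 * C⁻ k * C⁺ k` add up, by the induction hypothesis, to the first-row
expansion of the determinant of the squares. The off-diagonal terms are split by partial
fractions, `a j * a k = (a j - a k) / (w j - w k)`, and cancel because for each `j` the sums
`∑ k, C k / (w j - w k)` equal `c * C j * E j` with the same factor `E j` for both kinds of
cofactors, where `c = 1` for the permanent and `c = -1` for the determinant
(`rowCofactor_sum_div`). This last fact holds term by term in the sum over permutations.
The partial fractions need `w` injective; otherwise both determinants have two equal columns.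
-/

/-- The cofactor at position `(0, k)` of `A` in the immanant-like sum
`∑ σ, χ σ * ∏ i, A i (σ i)`: the sum over the permutations with `σ 0 = k`, the factor of row `0`
being left out. The weight `χ` is the sign for determinants and `1` for permanents. -/
noncomputable def rowCofactor {n : ℕ} (χ : Equiv.Perm (Fin (n + 1)) → ℂ)
    (A : Fin (n + 1) → Fin (n + 1) → ℂ) (k : Fin (n + 1)) : ℂ :=
  ∑ σ : Equiv.Perm (Fin (n + 1)),
    if σ 0 = k then χ σ * ∏ i : Fin n, A i.succ (σ i.succ) else 0

lemma sum_perm_eq_sum_rowCofactor {n : ℕ} (χ : Equiv.Perm (Fin (n + 1)) → ℂ)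
    (A : Fin (n + 1) → Fin (n + 1) → ℂ) :
    ∑ σ : Equiv.Perm (Fin (n + 1)), χ σ * ∏ i, A i (σ i) =
      ∑ k, A 0 k * rowCofactor χ A k := by
  simp only [rowCofactor, Finset.mul_sum]
  rw [Finset.sum_comm]
  refine Finset.sum_congr rfl fun σ _ => ?_
  simp only [mul_ite, mul_zero, Finset.sum_ite_eq, Finset.mem_univ, if_true]
  rw [Fin.prod_univ_succ]
  ring

lemma det_eq_sum_sign {n : ℕ} (A : Fin n → Fin n → ℂ) :
    (Matrix.of A).det =
      ∑ σ : Equiv.Perm (Fin n), ((Equiv.Perm.sign σ : ℤ) : ℂ) * ∏ i, A i (σ i) := by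
  rw [← Matrix.det_transpose, Matrix.det_apply']
  rfl

lemma det_eq_sum_rowCofactor {n : ℕ} (A : Fin (n + 1) → Fin (n + 1) → ℂ) :
    (Matrix.of A).det =
      ∑ k, A 0 k * rowCofactor (fun σ => ((Equiv.Perm.sign σ : ℤ) : ℂ)) A k := by
  rw [det_eq_sum_sign, ← sum_perm_eq_sum_rowCofactor]

/-- Cofactors are weighted sums over the permutations of a smaller index set, applied to the minor
whose columns are listed by `Equiv.swap 0 k ∘ Fin.succ`. -/
lemma rowCofactor_eq_minor {n : ℕ} (χ : Equiv.Perm (Fin (n + 1)) → ℂ)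
    (A : Fin (n + 1) → Fin (n + 1) → ℂ) (k : Fin (n + 1)) :
    rowCofactor χ A k = ∑ e : Equiv.Perm (Fin n), χ (Equiv.Perm.decomposeFin.symm (k, e)) *
      ∏ i : Fin n, A i.succ (Equiv.swap 0 k (e i).succ) := by
  rw [rowCofactor, ← Equiv.sum_comp Equiv.Perm.decomposeFin.symm, Fintype.sum_prod_type]
  simp only [Equiv.Perm.decomposeFin_symm_apply_zero, Equiv.Perm.decomposeFin_symm_apply_succ]
  rw [Finset.sum_eq_single k]
  · simp
  · intro b _ hb
    simp [hb]
  · simp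

lemma rowCofactor_sign {n : ℕ} (A : Fin (n + 1) → Fin (n + 1) → ℂ) (k : Fin (n + 1)) :
    rowCofactor (fun σ => ((Equiv.Perm.sign σ : ℤ) : ℂ)) A k = (if k = 0 then 1 else -1) *
      (Matrix.of fun i j : Fin n => A i.succ (Equiv.swap 0 k j.succ)).det := by
  rw [rowCofactor_eq_minor, det_eq_sum_sign, Finset.mul_sum]
  refine Finset.sum_congr rfl fun e _ => ?_
  rw [Equiv.Perm.decomposeFin.symm_sign]
  split_ifs <;> simp

/-- The key identity for the cofactors of a Cauchy matrix. The summand `k = j` on either side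
vanishes since `0⁻¹ = 0`. Transporting permutations with `σ 0 = j` to those with `σ 0 = k` by
`swap j k` changes a single factor of the product, and the identity becomes
`(z - v) / ((z - u) * (u - v)) = 1 / (z - u) + 1 / (u - v)`. -/
lemma rowCofactor_sum_div {n : ℕ} (χ : Equiv.Perm (Fin (n + 1)) → ℂ) (c : ℂ)
    (hχ : ∀ a b σ, a ≠ b → χ (Equiv.swap a b * σ) = c * χ σ)
    (z w : Fin (n + 1) → ℂ) (h : ∀ i j, z i ≠ w j) (hw : Function.Injective w)
    (j : Fin (n + 1)) :
    ∑ k, rowCofactor χ (fun i l => (z i - w l)⁻¹) k * (w j - w k)⁻¹ =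
      c * rowCofactor χ (fun i l => (z i - w l)⁻¹) j *
        (∑ i : Fin n, (z i.succ - w j)⁻¹ + ∑ k, (w j - w k)⁻¹) := by
  have step : ∀ k, rowCofactor χ (fun i l => (z i - w l)⁻¹) k * (w j - w k)⁻¹ =
      ∑ σ : Equiv.Perm (Fin (n + 1)), if σ 0 = j then
        c * χ σ * (∏ i : Fin n, (z i.succ - w (Equiv.swap j k (σ i.succ)))⁻¹) * (w j - w k)⁻¹
        else 0 := by
    intro k
    by_cases hk : j = k
    · subst hk; simp
    rw [rowCofactor, ← Equiv.sum_comp (Equiv.mulLeft (Equiv.swap j k)), Finset.sum_mul]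
    refine Finset.sum_congr rfl fun σ _ => ?_
    have hiff : Equiv.swap j k (σ 0) = k ↔ σ 0 = j := by
      rw [Equiv.swap_apply_eq_iff, Equiv.swap_apply_right]
    simp only [Equiv.coe_mulLeft, Equiv.Perm.mul_apply, hiff, hχ j k σ hk, ite_mul, zero_mul]
  simp only [step]
  rw [Finset.sum_comm, rowCofactor, Finset.mul_sum, Finset.sum_mul]
  refine Finset.sum_congr rfl fun σ _ => ?_
  by_cases hσ : σ 0 = j
  swap
  · simp [hσ]
  simp only [hσ, if_true]
  -- Both sums over `k` are reindexed by `k = σ i`; the index `i = 0` contributes nothing.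
  rw [← Equiv.sum_comp σ, ← Equiv.sum_comp σ (fun k => (w j - w k)⁻¹), Fin.sum_univ_succ,
    Fin.sum_univ_succ, hσ]
  simp only [sub_self, inv_zero, mul_zero, zero_add]
  rw [← Finset.sum_add_distrib, Finset.mul_sum]
  refine Finset.sum_congr rfl fun i _ => ?_
  have hne : ∀ i : Fin n, σ i.succ ≠ j := fun i hi =>
    Fin.succ_ne_zero i (σ.injective (hi.trans hσ.symm))
  have hrest : ∏ i' ∈ Finset.univ.erase i,
      (z i'.succ - w (Equiv.swap j (σ i.succ) (σ i'.succ)))⁻¹ =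
      ∏ i' ∈ Finset.univ.erase i, (z i'.succ - w (σ i'.succ))⁻¹ := by
    refine Finset.prod_congr rfl fun i' hi' => ?_
    rw [Equiv.swap_apply_of_ne_of_ne (hne i')]
    intro he
    exact Finset.ne_of_mem_erase hi' (Fin.succ_injective _ (σ.injective he))
  rw [← Finset.mul_prod_erase _ _ (Finset.mem_univ i), hrest,
    ← Finset.mul_prod_erase _ (fun i' : Fin n => (z i'.succ - w (σ i'.succ))⁻¹)
      (Finset.mem_univ i), Equiv.swap_apply_right]
  have h1 : z i.succ - w j ≠ 0 := sub_ne_zero.2 (h _ _)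
  have h2 : z i.succ - w (σ i.succ) ≠ 0 := sub_ne_zero.2 (h _ _)
  have h3 : w j - w (σ i.succ) ≠ 0 := sub_ne_zero.2 fun he => hne i (hw he).symm
  have hpf : (z i.succ - w j)⁻¹ * (w j - w (σ i.succ))⁻¹ = (z i.succ - w (σ i.succ))⁻¹ *
      ((z i.succ - w j)⁻¹ + (w j - w (σ i.succ))⁻¹) := by
    field_simp
    ring
  linear_combination (c * χ σ * ∏ i' ∈ Finset.univ.erase i, (z i'.succ - w (σ i'.succ))⁻¹) * hpf

/-- Cancellation of the off-diagonal terms: if the two families of cofactors satisfy the relation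
of `rowCofactor_sum_div` with opposite constants, only the diagonal survives in the product. -/
lemma sum_mul_sum_eq_diagonal {n : ℕ} (x : ℂ) (w D P E : Fin n → ℂ) (hx : ∀ k, x ≠ w k)
    (hw : Function.Injective w)
    (hD : ∀ j, ∑ k, D k * (w j - w k)⁻¹ = -1 * D j * E j)
    (hP : ∀ j, ∑ k, P k * (w j - w k)⁻¹ = 1 * P j * E j) :
    (∑ k, (x - w k)⁻¹ * D k) * (∑ k, (x - w k)⁻¹ * P k) =
      ∑ k, ((x - w k) ^ 2)⁻¹ * (D k * P k) := by
  have term : ∀ j k, ((x - w j)⁻¹ * D j) * ((x - w k)⁻¹ * P k) =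
      (if j = k then ((x - w j) ^ 2)⁻¹ * (D j * P j) else 0) +
      ((x - w j)⁻¹ * D j * (P k * (w j - w k)⁻¹) +
        (x - w k)⁻¹ * P k * (D j * (w k - w j)⁻¹)) := by
    intro j k
    by_cases hjk : j = k
    · subst hjk
      simp only [if_true, sub_self, inv_zero, mul_zero, add_zero, ← inv_pow]
      ring
    · have h1 : x - w j ≠ 0 := sub_ne_zero.2 (hx _)
      have h2 : x - w k ≠ 0 := sub_ne_zero.2 (hx _)
      have h3 : w j - w k ≠ 0 := sub_ne_zero.2 fun he => hjk (hw he)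
      rw [if_neg hjk, ← neg_sub (w j) (w k), inv_neg]
      field_simp
      ring
  rw [Finset.sum_mul_sum]
  simp only [term, Finset.sum_add_distrib, Finset.sum_ite_eq, Finset.mem_univ, if_true]
  rw [Finset.sum_comm (f := fun j k => (x - w k)⁻¹ * P k * (D j * (w k - w j)⁻¹))]
  simp only [← Finset.mul_sum, hD, hP]
  rw [add_eq_left, ← Finset.sum_add_distrib]
  exact Finset.sum_eq_zero fun j _ => by ring

/-- Borchardt's identity in all sizes, including `0`, where the induction starts. -/
lemma borchardt (n : ℕ) : ∀ z w : Fin n → ℂ, (∀ i j, z i ≠ w j) →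
    (Matrix.of fun i j => ((z i - w j) ^ 2)⁻¹).det =
      (Matrix.of fun i j => (z i - w j)⁻¹).det *
        ∑ σ : Equiv.Perm (Fin n), ∏ i, (z i - w (σ i))⁻¹ := by
  induction n with
  | zero => intro z w _; simp
  | succ n ih =>
    intro z w h
    by_cases hw : Function.Injective w
    swap
    · obtain ⟨a, b, hab, hne⟩ : ∃ a b, w a = w b ∧ a ≠ b := by
        simpa [Function.Injective] using hw
      rw [Matrix.det_zero_of_column_eq hne (by simp [hab]),
        Matrix.det_zero_of_column_eq hne (by simp [hab]), zero_mul]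
    have hper := sum_perm_eq_sum_rowCofactor (fun _ => 1) (fun i j => (z i - w j)⁻¹)
    simp only [one_mul] at hper
    rw [hper, det_eq_sum_rowCofactor, det_eq_sum_rowCofactor, sum_mul_sum_eq_diagonal (z 0) w _ _
      (fun j => ∑ i : Fin n, (z i.succ - w j)⁻¹ + ∑ k, (w j - w k)⁻¹) (h 0) hw
      (rowCofactor_sum_div _ (-1) (fun a b σ hab => by
        simp [Equiv.Perm.sign_mul, Equiv.Perm.sign_swap hab]) z w h hw)
      (rowCofactor_sum_div _ 1 (fun a b σ hab => by simp) z w h hw)]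
    refine Finset.sum_congr rfl fun k _ => ?_
    rw [rowCofactor_sign, rowCofactor_sign, rowCofactor_eq_minor]
    simp only [one_mul]
    rw [mul_assoc (ite _ _ _), ih (fun i => z i.succ) (fun j => w (Equiv.swap 0 k j.succ))
      fun _ _ => h _ _]

/-- The determinant of the matrix `(1/(z i - w j)^2)` equals the determinant of the
Cauchy matrix `(1/(z i - w j))` times its permanent. -/
theorem det_inv_sq_eq_det_mul_permanent (N : ℕ) (hN : 0 < N)
    (z w : Fin N → ℂ) (h : ∀ i j, z i ≠ w j) :
    (Matrix.of fun i j => ((z i - w j) ^ 2)⁻¹).det =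
      (Matrix.of fun i j => (z i - w j)⁻¹).det *
        ∑ σ : Equiv.Perm (Fin N), ∏ i, (z i - w (σ i))⁻¹ := by
  exact borchardt N z w h
end

section
/- Let N be a positive integer and let z, w : Fin N → ℂ satisfy z i ≠ w j for all i, j. Then the Cauchy-type determinant evaluates as det((z i − w j)⁻¹) = (−1)^{N(N−1)/2} · (∏_{i<j} (z i − z j)(w i − w j)) / (∏_{i,j} (z i − w j)). -/
/-!
The proof is by induction on the size, pivoting on the top left entry. Subtracting
`(z₀ - w₀) / (zᵢ - w₀)` times row `0` from row `i` clears the rest of column `0` and leaves the Schur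
complement
`1 / (zᵢ - wⱼ) - (z₀ - w₀) / ((zᵢ - w₀) (z₀ - wⱼ))
  = (z₀ - zᵢ) / (zᵢ - w₀) * ((wⱼ - w₀) / (z₀ - wⱼ)) * (1 / (zᵢ - wⱼ))`,
a Cauchy matrix of size one less with rows and columns rescaled. The scaling factors come out of the
determinant, and the `n` sign changes `wⱼ - w₀ = -(w₀ - wⱼ)` build up the sign `(-1) ^ (n (n - 1) / 2)`.
-/

/-- One elimination step: the Cauchy determinant of size `n + 1` in terms of the one of size `n`
obtained by deleting `z 0` and `w 0`. -/
lemma cauchy_det_succ {K : Type*} [Field K] {n : ℕ} (z w : Fin (n + 1) → K)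
    (h : ∀ i j, z i ≠ w j) :
    (Matrix.of fun i j => (z i - w j)⁻¹).det =
      (z 0 - w 0)⁻¹ * ((∏ i : Fin n, (z 0 - z i.succ) / (z i.succ - w 0)) *
        ((∏ j : Fin n, (w j.succ - w 0) / (z 0 - w j.succ)) *
          (Matrix.of fun i j : Fin n => (z i.succ - w j.succ)⁻¹).det)) := by
  have h' : ∀ i j, z i - w j ≠ 0 := fun i j => sub_ne_zero.mpr (h i j)
  let c : Fin (n + 1) → K := Fin.cons 0 fun i => (z 0 - w 0) / (z i.succ - w 0)
  let B : Matrix (Fin (n + 1)) (Fin (n + 1)) K :=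
    Matrix.of fun i j => (z i - w j)⁻¹ - c i * (z 0 - w j)⁻¹
  have hAB : (Matrix.of fun i j => (z i - w j)⁻¹).det = B.det := by
    refine Matrix.det_eq_of_forall_row_eq_smul_add_const c 0 (by simp [c]) fun i j => ?_
    simp [B, c]
  have hcol : ∀ i : Fin n, B i.succ 0 = 0 := by
    intro i
    have h1 := h' 0 0
    have h2 := h' i.succ 0
    simp only [B, c, Matrix.of_apply, Fin.cons_succ]
    field_simp
    ring
  have hsub : B.submatrix Fin.succ Fin.succ = Matrix.of fun i j =>
      (z 0 - z i.succ) / (z i.succ - w 0) *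
        (Matrix.of fun i j : Fin n => (w j.succ - w 0) / (z 0 - w j.succ) *
          (Matrix.of fun i j : Fin n => (z i.succ - w j.succ)⁻¹) i j) i j := by
    ext i j
    have h1 := h' 0 j.succ
    have h2 := h' i.succ 0
    have h3 := h' i.succ j.succ
    simp only [B, c, Matrix.submatrix_apply, Matrix.of_apply, Fin.cons_succ]
    field_simp
    ring
  rw [hAB, Matrix.det_succ_column_zero, Fin.sum_univ_succ]
  simp only [hcol, mul_zero, zero_mul, Finset.sum_const_zero, add_zero, Fin.succAbove_zero]
  rw [hsub, Matrix.det_mul_column, Matrix.det_mul_row]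
  simp [B, c]

/-- The Cauchy determinant over any field, the empty matrix included. -/
lemma cauchy_det_field {K : Type*} [Field K] (n : ℕ) (z w : Fin n → K)
    (h : ∀ i j, z i ≠ w j) :
    (Matrix.of fun i j => (z i - w j)⁻¹).det =
      (-1) ^ (n * (n - 1) / 2) *
        (∏ i, ∏ j ∈ Finset.Ioi i, (z i - z j) * (w i - w j)) /
          ∏ i, ∏ j, (z i - w j) := by
  induction n with
  | zero => simp
  | succ n ih =>
    have hsign : ∏ j : Fin n, (w j.succ - w 0) = (-1) ^ n * ∏ j : Fin n, (w 0 - w j.succ) := by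
      simp_rw [← neg_sub (w 0), Finset.prod_neg]
      simp
    rw [cauchy_det_succ z w h, ih _ _ fun i j => h i.succ j.succ, Nat.triangle_succ, pow_add]
    simp only [Fin.prod_univ_succ, Fin.prod_Ioi_zero, Fin.prod_Ioi_succ, Finset.prod_div_distrib,
      Finset.prod_mul_distrib, hsign]
    simp only [div_eq_mul_inv, mul_inv]
    ring

/-- Cauchy determinant formula:
`det((z i - w j)⁻¹) = (-1)^(N(N-1)/2) · ∏_{i<j} (z i - z j)(w i - w j) / ∏_{i,j} (z i - w j)`. -/
theorem cauchy_det (N : ℕ) (hN : 0 < N) (z w : Fin N → ℂ) (h : ∀ i j, z i ≠ w j) :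
    (Matrix.of fun i j => (z i - w j)⁻¹).det =
      (-1) ^ (N * (N - 1) / 2) *
        (∏ i, ∏ j ∈ Finset.Ioi i, (z i - z j) * (w i - w j)) /
          ∏ i, ∏ j, (z i - w j) := by
  exact cauchy_det_field N z w h
end

section
/- Let N be a positive integer, let w : Fin N → ℂ be fixed, and consider the function F of the variables z₁, …, z_N given by F(z) = det((z i − w j)⁻¹), defined on the set where z i ≠ w j for all i, j. Then applying the partial derivative in each of the variables z₁, …, z_N once yields ∂_{z₁}⋯∂_{z_N} F(z) = (−1)^N · det((z i − w j)⁻²). -/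
/-!
The variable `z i` enters the matrix `((z i - w j)⁻¹)` only through row `i`, and the determinant is
linear in each row. Hence `∂/∂z a` replaces row `a` by its derivative `-((z a - w j)²)⁻¹` and leaves
the other rows untouched (`fderiv_det_partialMatrix`). Iterating over distinct indices
(`foldr_eq_det_partialMatrix`) differentiates every row once, and pulling the sign out of all `N`
rows gives the factor `(-1) ^ N`. Each successive derivative is computed from an identity that is
valid on the whole domain `z i ≠ w j`, which is open, so the identity may be differentiated.
-/

/-- The Cauchy matrix `((y i - w j)⁻¹)` in which the rows with index in `l` have been replaced by
their derivatives `-((y i - w j)²)⁻¹`. -/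
noncomputable def partialMatrix {N : ℕ} (w : Fin N → ℂ) (l : List (Fin N)) (y : Fin N → ℂ) :
    Matrix (Fin N) (Fin N) ℂ :=
  Matrix.of fun i j => if i ∈ l then -((y i - w j) ^ 2)⁻¹ else (y i - w j)⁻¹

lemma isOpen_cauchy_domain {N : ℕ} (w : Fin N → ℂ) :
    IsOpen {y : Fin N → ℂ | ∀ i j, y i ≠ w j} := by
  simp only [Set.ofPred_forall]
  exact isOpen_iInter_of_finite fun i => isOpen_iInter_of_finite fun j =>
    isOpen_ne_fun (continuous_apply i) continuous_const

lemma differentiableAt_det_partialMatrix {N : ℕ} (w : Fin N → ℂ) (l : List (Fin N))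
    (y : Fin N → ℂ) (hy : ∀ i j, y i ≠ w j) :
    DifferentiableAt ℂ (fun y => (partialMatrix w l y).det) y := by
  have hentry : ∀ i j, DifferentiableAt ℂ (fun y => partialMatrix w l y i j) y := by
    intro i j
    have h := sub_ne_zero.mpr (hy i j)
    have hd : DifferentiableAt ℂ (fun y : Fin N → ℂ => y i - w j) y := by fun_prop
    by_cases hi : i ∈ l
    · simp only [partialMatrix, Matrix.of_apply, hi, if_true]
      exact ((hd.fun_pow 2).fun_inv (pow_ne_zero 2 h)).fun_neg
    · simp only [partialMatrix, Matrix.of_apply, hi, if_false]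
      exact hd.fun_inv h
  simp only [Matrix.det_apply']
  refine DifferentiableAt.fun_sum fun σ _ => DifferentiableAt.const_mul ?_ _
  exact (HasFDerivAt.finsetProd (u := Finset.univ)
    fun i _ => (hentry (σ i) i).hasFDerivAt).differentiableAt

/-- Differentiating in the direction of `y a`, where row `a` is still undifferentiated,
differentiates row `a`. -/
lemma fderiv_det_partialMatrix {N : ℕ} (w : Fin N → ℂ) (l : List (Fin N)) (a : Fin N)
    (ha : a ∉ l) (y : Fin N → ℂ) (hy : ∀ i j, y i ≠ w j) :
    fderiv ℂ (fun y => (partialMatrix w l y).det) y (Pi.single a 1) =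
      (partialMatrix w (a :: l) y).det := by
  rw [← (differentiableAt_det_partialMatrix w l y hy).lineDeriv_eq_fderiv, lineDeriv]
  -- the determinant as a linear function of row `a`, the other rows being fixed
  let L : (Fin N → ℂ) →ₗ[ℂ] ℂ :=
    LinearMap.proj a ∘ₗ Matrix.cramer (partialMatrix w l y).transpose
  have hL : ∀ b, L b = ((partialMatrix w l y).updateRow a b).det := fun b =>
    Matrix.cramer_transpose_apply _ _ _
  have hline : (fun t : ℂ => (partialMatrix w l (y + t • Pi.single a 1)).det) =
      fun t => L.toContinuousLinearMap (fun j => (y a + t - w j)⁻¹) := by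
    funext t
    rw [LinearMap.coe_toContinuousLinearMap', hL]
    congr 1
    ext i j
    by_cases hi : i = a
    · subst hi
      simp [partialMatrix, ha]
    · simp [partialMatrix, hi]
  have hrow : HasDerivAt (fun t : ℂ => fun j => (y a + t - w j)⁻¹)
      (fun j => -((y a - w j) ^ 2)⁻¹) 0 := by
    rw [hasDerivAt_pi]
    intro j
    have h : y a + 0 - w j ≠ 0 := by simpa using sub_ne_zero.mpr (hy a j)
    have hd : HasDerivAt (fun t : ℂ => y a + t - w j) 1 0 :=
      ((hasDerivAt_id (0 : ℂ)).const_add (y a)).sub_const (w j)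
    have h' : -((y a - w j) ^ 2)⁻¹ = -1 / (y a + 0 - w j) ^ 2 := by
      rw [add_zero, neg_div, one_div]
    rw [h']
    exact hd.fun_inv h
  have hcomp : HasDerivAt (fun t : ℂ => L.toContinuousLinearMap (fun j => (y a + t - w j)⁻¹))
      (L.toContinuousLinearMap (fun j => -((y a - w j) ^ 2)⁻¹)) 0 :=
    L.toContinuousLinearMap.hasFDerivAt.comp_hasDerivAt (0 : ℂ) hrow
  rw [hline, hcomp.deriv, LinearMap.coe_toContinuousLinearMap', hL]
  congr 1
  ext i j
  by_cases hi : i = a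
  · subst hi
    simp [partialMatrix]
  · simp [partialMatrix, hi]

lemma foldr_eq_det_partialMatrix {N : ℕ} (w : Fin N → ℂ) (F : (Fin N → ℂ) → ℂ)
    (hF : ∀ z : Fin N → ℂ, F z = (Matrix.of fun i j => (z i - w j)⁻¹).det)
    (l : List (Fin N)) (hl : l.Nodup) (y : Fin N → ℂ) (hy : ∀ i j, y i ≠ w j) :
    (l.foldr (fun i (g : (Fin N → ℂ) → ℂ) => fun y => fderiv ℂ g y (Pi.single i 1)) F) y =
      (partialMatrix w l y).det := by
  induction l generalizing y with
  | nil => simp [hF, partialMatrix]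
  | cons a l ih =>
    obtain ⟨ha, hl⟩ := List.nodup_cons.mp hl
    rw [List.foldr_cons, ← fderiv_det_partialMatrix w l a ha y hy]
    -- the inductive hypothesis holds near `y` because the domain is open
    have hev := Filter.eventuallyEq_of_mem ((isOpen_cauchy_domain w).mem_nhds hy)
      (fun x hx => ih hl x hx)
    rw [hev.fderiv_eq]

/-- Applying once the partial derivative in each of the variables `z 1, …, z N` to the
Cauchy determinant `F z = det((z i - w j)⁻¹)` yields `(-1)^N · det((z i - w j)⁻²)`,
at every point of the domain where `z i ≠ w j` for all `i, j`. -/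
theorem deriv_cauchy_det (N : ℕ) (hN : 0 < N) (w : Fin N → ℂ)
    (F : (Fin N → ℂ) → ℂ)
    (hF : ∀ z : Fin N → ℂ, F z = (Matrix.of fun i j => (z i - w j)⁻¹).det)
    (z : Fin N → ℂ) (hz : ∀ i j, z i ≠ w j) :
    ((List.finRange N).foldr
        (fun i (g : (Fin N → ℂ) → ℂ) => fun y => fderiv ℂ g y (Pi.single i 1)) F) z =
      (-1) ^ N * (Matrix.of fun i j => ((z i - w j) ^ 2)⁻¹).det := by
  rw [foldr_eq_det_partialMatrix w F hF _ (List.nodup_finRange N) z hz]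
  have h : partialMatrix w (List.finRange N) z =
      -(Matrix.of fun i j => ((z i - w j) ^ 2)⁻¹) := by
    ext i j
    simp [partialMatrix]
  rw [h, Matrix.det_neg, Fintype.card_fin]
end

section
/- Let m be a positive even integer and let H be the subgroup of ℤ² generated by the vectors (m+1, m−1) and (m−1, m+1). Then the quotient group ℤ²/H is cyclic of order 4m, and it is generated by the class of (1,0). -/
/-!
With `c = 2m + 1`, the functional `(x, y) ↦ x + c y` modulo `4m` kills both generators, because
its values on them are `2m · m` and `2m · (m + 2)` and `m` is even. Conversely, Cramer's rule
writes every vector with `x + c y ∈ 4mℤ` as an integral combination of the generators, again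
because `m / 2` is an integer (`mem_closure_iff_dvd`). Hence `ℤ² / H ≃ ℤ / 4m`, and since the
functional takes `(1, 0)` to `1`, the class of `(x, y)` is `x + c y` times that of `(1, 0)`.
-/

theorem mem_closure_iff_dvd (m : ℕ) (hme : Even m) (x y : ℤ) :
    (x, y) ∈ AddSubgroup.closure
      {((m : ℤ) + 1, (m : ℤ) - 1), ((m : ℤ) - 1, (m : ℤ) + 1)} ↔
    (4 * (m : ℤ)) ∣ x + (2 * m + 1) * y := by
  obtain ⟨n, rfl⟩ := hme
  rw [AddSubgroup.mem_closure_pair]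
  push_cast
  constructor
  · rintro ⟨a, b, h⟩
    simp only [Prod.smul_mk, Prod.mk_add_mk, smul_eq_mul, Prod.mk.injEq] at h
    obtain ⟨rfl, rfl⟩ := h
    exact ⟨a * n + b * (n + 1), by ring⟩
  · rintro ⟨k, hk⟩
    obtain rfl : x = 4 * ((n : ℤ) + n) * k - (2 * (n + n) + 1) * y := by linarith
    -- The coefficients solve `x + y = 2m (a + b)` and `x - y = 2 (a - b)`.
    refine ⟨k - y + 2 * n * k - n * y, k - 2 * n * k + n * y, ?_⟩
    simp only [Prod.smul_mk, Prod.mk_add_mk, smul_eq_mul, Prod.mk.injEq]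
    constructor <;> ring

/-- For even `m > 0`, the quotient of `ℤ²` by the subgroup generated by
`(m+1, m-1)` and `(m-1, m+1)` is cyclic of order `4m`, generated by the class
of `(1, 0)`. -/
theorem discriminant_group_cyclic (m : ℕ) (hm : 0 < m) (hme : Even m)
    (H : AddSubgroup (ℤ × ℤ))
    (hH : H = AddSubgroup.closure
      {((m : ℤ) + 1, (m : ℤ) - 1), ((m : ℤ) - 1, (m : ℤ) + 1)}) :
    Nat.card ((ℤ × ℤ) ⧸ H) = 4 * m ∧
    AddSubgroup.zmultiples
      ((QuotientAddGroup.mk ((1 : ℤ), (0 : ℤ)) : (ℤ × ℤ) ⧸ H)) = ⊤ := by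
  have mem (x y : ℤ) : (x, y) ∈ H ↔ (4 * (m : ℤ)) ∣ x + (2 * m + 1) * y := by
    rw [hH]
    exact mem_closure_iff_dvd m hme x y
  constructor
  · let f : ℤ × ℤ →+ ZMod (4 * m) :=
      { toFun := fun p => ((p.1 + (2 * m + 1) * p.2 : ℤ) : ZMod (4 * m))
        map_zero' := by simp
        map_add' := fun p q => by
          rw [← Int.cast_add]
          congr 1
          simp only [Prod.fst_add, Prod.snd_add]
          ring }
    have hf : Function.Surjective f := fun z => by
      obtain ⟨k, rfl⟩ := ZMod.intCast_surjective z
      exact ⟨(k, 0), by simp [f]⟩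
    have hker : H = f.ker := by
      ext ⟨x, y⟩
      rw [mem, AddMonoidHom.mem_ker]
      change _ ↔ ((x + (2 * m + 1) * y : ℤ) : ZMod (4 * m)) = 0
      rw [ZMod.intCast_zmod_eq_zero_iff_dvd]
      push_cast
      rfl
    rw [hker, Nat.card_congr (QuotientAddGroup.quotientKerEquivOfSurjective f hf).toEquiv,
      Nat.card_zmod]
  · rw [eq_top_iff]
    rintro q -
    obtain ⟨⟨x, y⟩, rfl⟩ := QuotientAddGroup.mk_surjective q
    refine AddSubgroup.mem_zmultiples_iff.2 ⟨x + (2 * m + 1) * y, ?_⟩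
    rw [← QuotientAddGroup.mk_zsmul, QuotientAddGroup.eq]
    simp only [Prod.smul_mk, Prod.neg_mk, Prod.mk_add_mk, smul_eq_mul]
    rw [mem]
    exact ⟨0, by ring⟩
end

section
/- Let M be a positive integer, τ ∈ ℂ with Im τ > 0, ζ ∈ ℂ, and l ∈ ℤ. Then the modular S-transformation holds: Θ_l(−1/τ, ζ/τ; M) = √(−iτ/M) · exp(πi·ζ²/(M·τ)) · ∑_{μ=0}^{M−1} exp(−2πi·l·μ/M) · Θ_μ(τ, ζ; M), where √ denotes the principal branch of the complex square root (note that −iτ has positive real part when Im τ > 0). -/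
open Complex

/-!
Grouping the integers by their residue modulo `M` turns the finite sum on the right-hand side into
the Jacobi theta function `jacobiTheta₂ ((ζ - l) / M) (τ / M)`: for `k = M n + μ` the twist
`exp (-2πi l μ / M)` equals `exp (-2πi l k / M)`, which shifts `ζ` to `ζ - l`
(`sum_twisted_Theta`). On the left-hand side, expanding the square expresses
`Theta M l` as a multiple of a single Jacobi theta function (`Theta_eq_jacobiTheta₂`), here
`jacobiTheta₂ ((ζ - l) / τ) (-M / τ)`. These two are exchanged by the functional
equation of `jacobiTheta₂`, itself a consequence of Poisson summation.
-/

/-- The theta function with characteristics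
`Θ_l(τ,ζ;M) = ∑_{n∈ℤ} exp(πiτM(n + l/M)² + 2πiζ(n + l/M))`. -/
noncomputable def Theta (M : ℕ) (l : ℤ) (τ ζ : ℂ) : ℂ :=
  ∑' n : ℤ, Complex.exp ((Real.pi : ℂ) * I * τ * (M : ℂ) * ((n : ℂ) + (l : ℂ) / (M : ℂ)) ^ 2
    + 2 * (Real.pi : ℂ) * I * ζ * ((n : ℂ) + (l : ℂ) / (M : ℂ)))

lemma Theta_eq_jacobiTheta₂ (M : ℕ) (hM : 0 < M) (l : ℤ) (τ ζ : ℂ) :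
    Theta M l τ ζ = cexp (Real.pi * I * τ * l ^ 2 / M + 2 * Real.pi * I * ζ * l / M) *
      jacobiTheta₂ (ζ + l * τ) (M * τ) := by
  have hM' : (M : ℂ) ≠ 0 := by exact_mod_cast hM.ne'
  rw [Theta, jacobiTheta₂, ← tsum_mul_left]
  refine tsum_congr fun n ↦ ?_
  rw [jacobiTheta₂_term, ← Complex.exp_add]
  congr 1
  field_simp
  ring

/-- Summing over the residues `μ` modulo `M` and then over each residue class is the same as
summing over all integers `k = M n + μ`; the character `exp (-2πi l μ / M)` depends only on the
class of `k`. -/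
lemma sum_twisted_Theta (M : ℕ) (hM : 0 < M) (τ ζ : ℂ) (hτ : 0 < τ.im) (l : ℤ) :
    ∑ μ ∈ Finset.range M,
      cexp (-(2 * (Real.pi : ℂ) * I * (l : ℂ) * (μ : ℂ) / (M : ℂ))) * Theta M μ τ ζ =
    jacobiTheta₂ ((ζ - l) / M) (τ / M) := by
  have hM' : (M : ℂ) ≠ 0 := by exact_mod_cast hM.ne'
  have : NeZero M := ⟨hM.ne'⟩
  have him : 0 < (τ / M).im := by
    rw [Complex.div_natCast_im]
    positivity
  have hs := ((summable_jacobiTheta₂_term_iff ((ζ - l) / M) (τ / M)).mpr him)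
  have hs' := (Equiv.summable_iff (Equiv.trans (Equiv.prodComm _ _)
    (Int.divModEquiv M).symm)).mpr hs
  simp only [Function.comp_def] at hs'
  rw [jacobiTheta₂, ← Equiv.tsum_eq (Equiv.trans (Equiv.prodComm _ _) (Int.divModEquiv M).symm),
    hs'.tsum_prod, tsum_fintype, Finset.sum_range]
  refine Finset.sum_congr rfl fun μ _ ↦ ?_
  rw [Theta, ← tsum_mul_left]
  refine tsum_congr fun n ↦ ?_
  have hper : cexp (-(2 * Real.pi * I * l * (μ : ℕ) / M)) =
      cexp (-(2 * Real.pi * I * l * (μ : ℕ) / M) + ((-(l * n) : ℤ) : ℂ) * (2 * Real.pi * I)) := by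
    rw [Complex.exp_add, Complex.exp_int_mul_two_pi_mul_I, mul_one]
  rw [hper, jacobiTheta₂_term, ← Complex.exp_add]
  congr 1
  simp [Int.divModEquiv]
  field_simp
  ring

/-- Modular S-transformation of the theta function:
`Θ_l(-1/τ, ζ/τ; M) = √(-iτ/M) e^{πiζ²/(Mτ)} ∑_{μ mod M} e^{-2πilμ/M} Θ_μ(τ,ζ;M)`,
where the square root is the principal branch (realized by `cpow` with exponent `1/2`). -/
theorem theta_S_transform (M : ℕ) (hM : 0 < M) (τ ζ : ℂ) (hτ : 0 < τ.im) (l : ℤ) :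
    Theta M l (-1 / τ) (ζ / τ) =
      ((-I * τ) / (M : ℂ)) ^ ((1 : ℂ) / 2) *
        Complex.exp ((Real.pi : ℂ) * I * ζ ^ 2 / ((M : ℂ) * τ)) *
          ∑ μ ∈ Finset.range M,
            Complex.exp (-(2 * (Real.pi : ℂ) * I * (l : ℂ) * (μ : ℂ) / (M : ℂ))) *
              Theta M μ τ ζ := by
  have hM' : (M : ℂ) ≠ 0 := by exact_mod_cast hM.ne'
  have hτ0 : τ ≠ 0 := by
    rintro rfl
    simp at hτ
  have hroot : ((-I * τ) / (M : ℂ)) ^ ((1 : ℂ) / 2) ≠ 0 := by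
    rw [Ne, Complex.cpow_eq_zero_iff]
    simp [hτ0, hM']
  rw [sum_twisted_Theta M hM τ ζ hτ l, jacobiTheta₂_functional_equation,
    Theta_eq_jacobiTheta₂ M hM]
  have e1 : (ζ - l) / M / (τ / M) = ζ / τ + l * (-1 / τ) := by
    field_simp
    ring
  have e2 : -1 / (τ / M) = M * (-1 / τ) := by
    field_simp
  have e3 : -I * (τ / M) = -I * τ / M := by ring
  have e4 : cexp (Real.pi * I * (-1 / τ) * l ^ 2 / M + 2 * Real.pi * I * (ζ / τ) * l / M) =
      cexp (Real.pi * I * ζ ^ 2 / (M * τ)) *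
        cexp (-Real.pi * I * ((ζ - l) / M) ^ 2 / (τ / M)) := by
    rw [← Complex.exp_add]
    congr 1
    field_simp
    ring
  rw [e1, e2, e3, e4]
  generalize ((-I * τ) / (M : ℂ)) ^ ((1 : ℂ) / 2) = r at hroot ⊢
  field_simp
end

section
/- Let m be a positive integer, λ ∈ ℤ, τ ∈ ℂ with Im τ > 0, and ζ ∈ ℂ. Then the two-dimensional lattice theta series of the lattice L decomposes as a sum of two products of one-dimensional theta functions: ∑_{(n₁,n₂)∈ℤ×ℤ} exp( πi·τ·[ m·(n₁+n₂+λ/(2m))² + (n₁−n₂+λ/2)² ] + 2πi·ζ·(n₁+n₂+λ/(2m)) ) = Θ_λ(τ,0;4)·Θ_λ(τ,2ζ;4m) + Θ_{λ+2}(τ,0;4)·Θ_{λ+2m}(τ,2ζ;4m). -/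
/-!
Put `s = n₁ + n₂` and `d = n₁ - n₂`. The pair `(s, d)` ranges over all pairs of integers of equal
parity. If `s = 2a`, `d = 2b`, the quadratic form equals
`4(b + λ/4)² + 4m(a + λ/(4m))²` (with `2ζ` coupled to `a + λ/(4m)`), and if `s = 2a + 1`,
`d = 2b + 1`, it has the same shape with `λ` replaced by `λ + 2` in the first square and by
`λ + 2m` in the second. So the sum over each parity class is a sum over `ℤ × ℤ` of a product, which
factors because both one-dimensional theta series converge absolutely (`summable_thetaTerm`); the
parity splitting is the bijection `parityMap_bijective`.
-/

open Complex


open Complex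

/-- The `n`-th summand of `Theta M l τ ζ`. -/
noncomputable def thetaTerm (M : ℕ) (l : ℤ) (τ ζ : ℂ) (n : ℤ) : ℂ :=
  Complex.exp ((Real.pi : ℂ) * I * τ * (M : ℂ) * ((n : ℂ) + (l : ℂ) / (M : ℂ)) ^ 2
    + 2 * (Real.pi : ℂ) * I * ζ * ((n : ℂ) + (l : ℂ) / (M : ℂ)))

/-- Expanding the square turns the series, up to a factor independent of `n`, into the Jacobi theta
series at `(τ l + ζ, M τ)`. -/
lemma summable_thetaTerm {M : ℕ} (hM : 0 < M) (l : ℤ) {τ : ℂ} (ζ : ℂ) (hτ : 0 < τ.im) :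
    Summable (thetaTerm M l τ ζ) := by
  have hM' : (M : ℂ) ≠ 0 := by exact_mod_cast hM.ne'
  have him : 0 < ((M : ℂ) * τ).im := by
    rw [← Complex.ofReal_natCast, Complex.im_ofReal_mul]
    positivity
  have h := ((summable_jacobiTheta₂_term_iff (τ * l + ζ) ((M : ℂ) * τ)).2 him).mul_left
    (Complex.exp ((Real.pi : ℂ) * I * τ * (l : ℂ) ^ 2 / M + 2 * (Real.pi : ℂ) * I * ζ * l / M))
  refine h.congr fun n => ?_
  rw [thetaTerm, jacobiTheta₂_term, ← Complex.exp_add]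
  congr 1
  field_simp
  ring

lemma hasSum_thetaTerm_mul {M N : ℕ} (hM : 0 < M) (hN : 0 < N) (k l : ℤ) {τ : ℂ} (ζ ξ : ℂ)
    (hτ : 0 < τ.im) :
    HasSum (fun p : ℤ × ℤ => thetaTerm M k τ ζ p.1 * thetaTerm N l τ ξ p.2)
      (Theta M k τ ζ * Theta N l τ ξ) := by
  have hf := (summable_thetaTerm hM k ζ hτ).norm
  have hg := (summable_thetaTerm hN l ξ hτ).norm
  have h := (summable_mul_of_summable_norm hf hg).hasSum
  rwa [← tsum_mul_tsum_of_summable_norm hf hg] at h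

/-- Parametrization of the pairs `(n₁, n₂)` by the parity of `n₁ + n₂`: the summand `inl (b, a)` is
sent to the pair with `n₁ + n₂ = 2a`, `n₁ - n₂ = 2b`, and `inr (b, a)` to the pair with
`n₁ + n₂ = 2a + 1`, `n₁ - n₂ = 2b + 1`. -/
def parityMap : (ℤ × ℤ) ⊕ (ℤ × ℤ) → ℤ × ℤ :=
  Sum.elim (fun p => (p.2 + p.1, p.2 - p.1)) (fun p => (p.2 + p.1 + 1, p.2 - p.1))

lemma parityMap_bijective : Function.Bijective parityMap := by
  constructor
  · rintro (⟨a, b⟩ | ⟨a, b⟩) (⟨c, d⟩ | ⟨c, d⟩) h <;>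
      simp only [parityMap, Sum.elim_inl, Sum.elim_inr, Prod.mk.injEq, Sum.inl.injEq,
        Sum.inr.injEq, reduceCtorEq] at h ⊢ <;> omega
  · rintro ⟨x, y⟩
    rcases Int.even_or_odd' (x + y) with ⟨a, h | h⟩
    · refine ⟨Sum.inl (x - a, a), ?_⟩
      simp only [parityMap, Sum.elim_inl, Prod.mk.injEq]
      omega
    · refine ⟨Sum.inr (x - a - 1, a), ?_⟩
      simp only [parityMap, Sum.elim_inr, Prod.mk.injEq]
      omega

/-- The theta series of the coset `λq*₁ + L` of the lattice `L` (in orthogonal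
coordinates) decomposes as
`Θ_λ(τ,0;4)Θ_λ(τ,2ζ;4m) + Θ_{λ+2}(τ,0;4)Θ_{λ+2m}(τ,2ζ;4m)`. -/
theorem lattice_theta_decomposition (m : ℕ) (hm : 0 < m) (lam : ℤ)
    (τ ζ : ℂ) (hτ : 0 < τ.im) :
    (∑' p : ℤ × ℤ, Complex.exp ((Real.pi : ℂ) * I * τ *
        ((m : ℂ) * ((p.1 : ℂ) + (p.2 : ℂ) + (lam : ℂ) / (2 * (m : ℂ))) ^ 2 +
          ((p.1 : ℂ) - (p.2 : ℂ) + (lam : ℂ) / 2) ^ 2) +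
      2 * (Real.pi : ℂ) * I * ζ * ((p.1 : ℂ) + (p.2 : ℂ) + (lam : ℂ) / (2 * (m : ℂ))))) =
      Theta 4 lam τ 0 * Theta (4 * m) lam τ (2 * ζ) +
        Theta 4 (lam + 2) τ 0 * Theta (4 * m) (lam + 2 * m) τ (2 * ζ) := by
  have hm' : (m : ℂ) ≠ 0 := by exact_mod_cast hm.ne'
  have h4m : 0 < 4 * m := by positivity
  refine HasSum.tsum_eq ?_
  rw [← (Equiv.ofBijective parityMap parityMap_bijective).hasSum_iff]
  refine HasSum.sum ?_ ?_
  · convert hasSum_thetaTerm_mul (by norm_num : 0 < 4) h4m lam lam 0 (2 * ζ) hτ using 2 with p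
    simp only [Function.comp_apply, Equiv.ofBijective_apply, parityMap, Sum.elim_inl, thetaTerm,
      ← Complex.exp_add]
    congr 1
    push_cast
    field_simp
    ring
  · convert hasSum_thetaTerm_mul (by norm_num : 0 < 4) h4m (lam + 2) (lam + 2 * m) 0 (2 * ζ) hτ
      using 2 with p
    simp only [Function.comp_apply, Equiv.ofBijective_apply, parityMap, Sum.elim_inr, thetaTerm,
      ← Complex.exp_add]
    congr 1
    push_cast
    field_simp
    ring
end

section
/- For every integer n ≥ 2, the following identity of rational numbers holds: ∑_{l=1}^{n−1} l·(l+1)·(2l+1) · ( (n−2)! · (n−1)! ) / ( (n−l−1)! · (n+l)! ) = 1. -/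
/-!
The sum telescopes. With `q l = l² + n - 1` one has
`q l * (n + l) - q (l + 1) * (n - l - 1) = l (l + 1) (2 l + 1)`,
so the `l`-th summand is `T l - T (l + 1)`, where
`T l = (n-2)! (n-1)! q l / ((n-l-1)! (n+l-1)!)` and `T n` is read as `0`.
Since `T 1 = 1`, the sum is `1`.
-/

/-- Partial sums of the telescoping series, with `n = m + 2`. The remainder `T (k + 1)` is written
with the factor `m + 1 - k` not cancelled against the factorial, so that it vanishes at the last
index `k = m + 1`. -/
lemma ope_partial_sum (m k : ℕ) (hk : k ≤ m + 1) :
    ∑ l ∈ Finset.Icc 1 k,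
      ((l : ℚ) * ((l : ℚ) + 1) * (2 * (l : ℚ) + 1)) *
        ((m.factorial : ℚ) * ((m + 1).factorial : ℚ)) /
          (((m + 2 - l - 1).factorial : ℚ) * ((m + 2 + l).factorial : ℚ)) =
      1 - (m.factorial : ℚ) * ((m + 1).factorial : ℚ) *
        ((((k : ℚ) + 1) ^ 2 + m + 1) * ((m : ℚ) + 1 - k)) /
          (((m + 2 - k - 1).factorial : ℚ) * ((m + 2 + k).factorial : ℚ)) := by
  induction k with
  | zero =>
    have h1 : (m.factorial : ℚ) ≠ 0 := by positivity
    have h2 : (m : ℚ) + 1 ≠ 0 := by positivity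
    have h3 : (m : ℚ) + 1 + 1 ≠ 0 := by positivity
    have e : m + 2 - 0 - 1 = m + 1 := by omega
    rw [e]
    simp only [Nat.factorial_succ, add_zero]
    push_cast
    simp
    field_simp
    ring
  | succ k ih =>
    rw [Finset.sum_Icc_succ_top (by omega), ih (by omega)]
    -- `d = n - k - 2` makes the subtraction in the factorials disappear
    obtain ⟨d, rfl⟩ : ∃ d, m = k + d := ⟨m - k, by omega⟩
    have e1 : k + d + 2 - k - 1 = d + 1 := by omega
    have e2 : k + d + 2 - (k + 1) - 1 = d := by omega
    have e3 : k + d + 2 + (k + 1) = (k + d + 2 + k) + 1 := by omega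
    rw [e1, e2, e3, Nat.factorial_succ d, Nat.factorial_succ (k + d + 2 + k)]
    have h1 : (d.factorial : ℚ) ≠ 0 := by positivity
    have h2 : ((k + d + 2 + k).factorial : ℚ) ≠ 0 := by positivity
    have h3 : (d : ℚ) + 1 ≠ 0 := by positivity
    have h4 : (k : ℚ) + d + 2 + k + 1 ≠ 0 := by positivity
    generalize ((k + d + 2 + k).factorial) = A at *
    generalize (k + d).factorial = B
    generalize (k + d + 1).factorial = C
    push_cast
    field_simp
    ring

/-- For `n ≥ 2`,
`∑_{l=1}^{n-1} l(l+1)(2l+1) (n-2)!(n-1)! / ((n-l-1)!(n+l)!) = 1`. -/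
theorem ope_coefficient_recurrence (n : ℕ) (hn : 2 ≤ n) :
    ∑ l ∈ Finset.Icc 1 (n - 1),
      ((l : ℚ) * ((l : ℚ) + 1) * (2 * (l : ℚ) + 1)) *
        (((n - 2).factorial : ℚ) * ((n - 1).factorial : ℚ)) /
          (((n - l - 1).factorial : ℚ) * ((n + l).factorial : ℚ)) = 1 := by
  obtain ⟨m, rfl⟩ : ∃ m, n = m + 2 := ⟨n - 2, by omega⟩
  have h := ope_partial_sum m (m + 1) le_rfl
  have e1 : m + 2 - 1 = m + 1 := by omega
  have e2 : m + 2 - 2 = m := by omega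
  rw [e1, e2, h]
  push_cast
  simp
end

section
/- Let l be a nonnegative integer and let w, z, a be real numbers with w < z < a. Then ((2l+1)!/(l!)²) · (z−w)^{−(2l+1)} · ∫_{w}^{z} (z−t)^l · (t−w)^l · (t−a)^{−(2l+2)} dt = ( (z−a)·(w−a) )^{−(l+1)}. -/
/-!
The Möbius map `u(t) = (t-w)(a-z) / ((z-w)(a-t))` sends `w ↦ 0`, `z ↦ 1`, and satisfies
`1 - u = (z-t)(a-w) / ((z-w)(a-t))` and `u' = (a-z)(a-w) / ((z-w)(a-t)²)`. Hence
`u^l (1-u)^l u'` is the integrand of the theorem times `((a-z)(a-w))^(l+1) / (z-w)^(2l+1)`, and the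
substitution `u` reduces the claim to Euler's beta integral
`∫₀¹ u^l (1-u)^l du = (l!)² / (2l+1)!` (`integral_pow_mul_one_sub_pow`).
-/

/-- Euler's beta integral at natural-number exponents. The induction on `m` integrates the
derivative of `u^(l+1) (1-u)^(m+1)`, which vanishes at both endpoints. -/
theorem integral_pow_mul_one_sub_pow (m : ℕ) : ∀ l : ℕ,
    ∫ u in (0 : ℝ)..1, u ^ l * (1 - u) ^ m =
      (l.factorial : ℝ) * m.factorial / (l + m + 1).factorial := by
  induction m with
  | zero =>
    intro l
    have : (l.factorial : ℝ) ≠ 0 := by positivity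
    simp [Nat.factorial_succ]
    field_simp
  | succ m ih =>
    intro l
    have hd : ∀ u ∈ Set.uIcc (0 : ℝ) 1, HasDerivAt (fun u : ℝ => u ^ (l + 1) * (1 - u) ^ (m + 1))
        (((l : ℝ) + 1) * (u ^ l * (1 - u) ^ (m + 1))
          - ((m : ℝ) + 1) * (u ^ (l + 1) * (1 - u) ^ m)) u := by
      intro u _
      have h1 := (hasDerivAt_id u).fun_pow (l + 1)
      have h2 := ((hasDerivAt_id u).const_sub 1).fun_pow (m + 1)
      refine (h1.mul h2).congr_deriv ?_
      simp
      ring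
    have hI := intervalIntegral.integral_eq_sub_of_hasDerivAt hd
      (Continuous.intervalIntegrable (by fun_prop) _ _)
    rw [intervalIntegral.integral_sub (Continuous.intervalIntegrable (by fun_prop) _ _)
      (Continuous.intervalIntegrable (by fun_prop) _ _), intervalIntegral.integral_const_mul,
      intervalIntegral.integral_const_mul, ih (l + 1)] at hI
    have hl : (l : ℝ) + 1 ≠ 0 := by positivity
    apply mul_left_cancel₀ hl
    have e : l + 1 + m + 1 = l + (m + 1) + 1 := by ring
    rw [e] at hI
    simp only [ne_eq, Nat.add_eq_zero_iff, one_ne_zero, and_false, not_false_eq_true, zero_pow,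
      sub_self, mul_zero, zero_mul] at hI
    rw [sub_eq_zero.mp hI, Nat.factorial_succ l, Nat.factorial_succ m]
    push_cast
    ring

/-- For `w < z < a` and `l ∈ ℕ`,
`((2l+1)!/(l!)²) (z-w)^{-(2l+1)} ∫_w^z (z-t)^l (t-w)^l (t-a)^{-(2l+2)} dt
  = ((z-a)(w-a))^{-(l+1)}`. -/
theorem weighted_integral_identity (l : ℕ) (w z a : ℝ) (hwz : w < z) (hza : z < a) :
    (((2 * l + 1).factorial : ℝ) / ((l.factorial : ℝ) ^ 2)) *
        (z - w) ^ (-(2 * (l : ℤ) + 1)) *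
        ∫ t in w..z, (z - t) ^ l * (t - w) ^ l * (t - a) ^ (-(2 * (l : ℤ) + 2)) =
      ((z - a) * (w - a)) ^ (-((l : ℤ) + 1)) := by
  have hzw : z - w ≠ 0 := by linarith
  have haz : a - z ≠ 0 := by linarith
  have haw : a - w ≠ 0 := by linarith
  have hat : ∀ t ∈ Set.uIcc w z, a - t ≠ 0 := by
    intro t ht
    rw [Set.uIcc_of_le hwz.le] at ht
    linarith [ht.2]
  have hsub := intervalIntegral.integral_comp_mul_deriv (a := w) (b := z)
    (f := fun t => (t - w) * (a - z) / ((z - w) * (a - t)))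
    (f' := fun t => (a - z) * (a - w) / ((z - w) * (a - t) ^ 2))
    (g := fun u => u ^ l * (1 - u) ^ l)
    (by
      intro t ht
      have h := hat t ht
      have h1 := ((hasDerivAt_id t).sub_const w).mul_const (a - z)
      have h2 := ((hasDerivAt_id t).const_sub a).const_mul (z - w)
      refine (h1.div h2 (mul_ne_zero hzw h)).congr_deriv ?_
      simp only [id]
      field_simp
      ring)
    (by
      refine ContinuousOn.div (by fun_prop) (by fun_prop) ?_
      intro t ht
      exact mul_ne_zero hzw (pow_ne_zero _ (hat t ht)))
    (by fun_prop)
  have e0 : (w - w) * (a - z) / ((z - w) * (a - w)) = 0 := by simp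
  have e1 : (z - w) * (a - z) / ((z - w) * (a - z)) = 1 := div_self (mul_ne_zero hzw haz)
  simp only [e0, e1] at hsub
  rw [integral_pow_mul_one_sub_pow] at hsub
  have hcongr : ∫ t in w..z, (z - t) ^ l * (t - w) ^ l * (t - a) ^ (-(2 * (l : ℤ) + 2)) =
      ∫ t in w..z, ((z - w) ^ (2 * l + 1) / ((a - z) * (a - w)) ^ (l + 1)) *
        (((fun u : ℝ => u ^ l * (1 - u) ^ l) ∘
          fun t => (t - w) * (a - z) / ((z - w) * (a - t))) t *
          ((a - z) * (a - w) / ((z - w) * (a - t) ^ 2))) := by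
    apply intervalIntegral.integral_congr
    intro t ht
    have h := hat t ht
    have h1 : 1 - (t - w) * (a - z) / ((z - w) * (a - t)) =
        (z - t) * (a - w) / ((z - w) * (a - t)) := by
      field_simp
      ring
    have h2 : (t - a) ^ (-(2 * (l : ℤ) + 2)) = ((a - t) ^ (2 * l + 2))⁻¹ := by
      have : (2 * (l : ℤ) + 2) = ((2 * l + 2 : ℕ) : ℤ) := by push_cast; ring
      rw [zpow_neg, this, zpow_natCast, ← neg_sub a t, Even.neg_pow ⟨l + 1, by ring⟩]
    simp only [Function.comp, h1, h2]
    simp only [div_pow, mul_pow, pow_add, pow_mul']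
    field_simp
  rw [hcongr, intervalIntegral.integral_const_mul]
  simp only [Function.comp] at hsub ⊢
  rw [hsub]
  have h3 : (z - w) ^ (-(2 * (l : ℤ) + 1)) = ((z - w) ^ (2 * l + 1))⁻¹ := by
    rw [zpow_neg]; norm_cast
  have h4 : ((z - a) * (w - a)) ^ (-((l : ℤ) + 1)) = (((a - z) * (a - w)) ^ (l + 1))⁻¹ := by
    rw [zpow_neg, show (z - a) * (w - a) = (a - z) * (a - w) by ring]; norm_cast
  rw [h3, h4, ← two_mul]
  have hl : (l.factorial : ℝ) ≠ 0 := by positivity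
  have hl2 : ((2 * l + 1).factorial : ℝ) ≠ 0 := by positivity
  have hp := pow_ne_zero (2 * l + 1) hzw
  have hq := pow_ne_zero (l + 1) (mul_ne_zero haz haw)
  generalize (z - w) ^ (2 * l + 1) = p at *
  generalize ((a - z) * (a - w)) ^ (l + 1) = q at *
  field_simp
end

section
/- Let H be the subgroup of ℤ³ generated by the vectors (3,1,1), (1,2,0), and (1,0,2). Then the quotient group ℤ³/H is cyclic of order 8. -/
/-!
The homomorphism `(x, y, z) ↦ -2x + y + 5z` from `ℤ³` to `ℤ/8` is surjective and kills the three
generators. Conversely, if `-2x + y + 5z = 8k`, then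
`(x, y, z) = (z - 2k) • (3,1,1) + (x - 3z + 5k) • (1,2,0) + k • (1,0,2)`, so its kernel is exactly
`H`, and the first isomorphism theorem gives `ℤ³ / H ≃ ℤ/8`.
-/

/-- The homomorphism `(x, y, z) ↦ -2x + y + 5z` modulo `8`. -/
def discHom : ℤ × ℤ × ℤ →+ ZMod 8 where
  toFun v := ((-2 * v.1 + v.2.1 + 5 * v.2.2 : ℤ) : ZMod 8)
  map_zero' := by simp
  map_add' v w := by
    simp only [Prod.fst_add, Prod.snd_add]
    push_cast
    ring

lemma discHom_apply (x y z : ℤ) :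
    discHom (x, y, z) = ((-2 * x + y + 5 * z : ℤ) : ZMod 8) := rfl

lemma discHom_surjective : Function.Surjective discHom := fun a => by
  obtain ⟨n, rfl⟩ := ZMod.intCast_surjective a
  exact ⟨(0, n, 0), by simp [discHom_apply]⟩

lemma closure_eq_ker_discHom :
    AddSubgroup.closure {((3, 1, 1) : ℤ × ℤ × ℤ), (1, 2, 0), (1, 0, 2)} = discHom.ker := by
  apply le_antisymm
  · rw [AddSubgroup.closure_le]
    rintro v (rfl | rfl | rfl) <;>
      simp only [SetLike.mem_coe, AddMonoidHom.mem_ker, discHom_apply] <;> decide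
  · rintro ⟨x, y, z⟩ h
    rw [AddMonoidHom.mem_ker, discHom_apply, ZMod.intCast_zmod_eq_zero_iff_dvd] at h
    obtain ⟨k, hk⟩ := h
    have e : ((x, y, z) : ℤ × ℤ × ℤ) = (z - 2 * k) • ((3, 1, 1) : ℤ × ℤ × ℤ)
        + (x - 3 * z + 5 * k) • ((1, 2, 0) : ℤ × ℤ × ℤ) + k • ((1, 0, 2) : ℤ × ℤ × ℤ) := by
      ext <;> simp <;> push_cast at hk <;> linarith
    rw [e]
    refine add_mem (add_mem ?_ ?_) ?_ <;>
      exact zsmul_mem (AddSubgroup.subset_closure (by simp)) _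

/-- The quotient of `ℤ³` by the subgroup generated by `(3,1,1)`, `(1,2,0)`, `(1,0,2)`
is cyclic of order 8. -/
theorem c3_lattice_discriminant (H : AddSubgroup (ℤ × ℤ × ℤ))
    (hH : H = AddSubgroup.closure {(3, 1, 1), (1, 2, 0), (1, 0, 2)}) :
    Nat.card ((ℤ × ℤ × ℤ) ⧸ H) = 8 ∧ IsAddCyclic ((ℤ × ℤ × ℤ) ⧸ H) := by
  rw [closure_eq_ker_discHom] at hH
  subst hH
  let e := QuotientAddGroup.quotientKerEquivOfSurjective discHom discHom_surjective
  exact ⟨(Nat.card_congr e.toEquiv).trans (Nat.card_zmod 8),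
    isAddCyclic_of_surjective e.symm e.symm.surjective⟩
end

section
/- Let m ≥ 2 be an even integer. Then the infimum over all pairs of integers (n₁,n₂) ∈ ℤ × ℤ of the quantity m·(n₁+n₂+1/(2m))² + (n₁−n₂+1/2)² equals (m+1)/(4m), and it is attained at (n₁,n₂) = (0,0). -/
/-! With `s = n₁ + n₂` and `d = n₁ - n₂`, expanding the squares gives
`m (s + 1/(2m))² + (d + 1/2)² = (m + 1)/(4m) + (m s² + s) + (d² + d)`.
The integer `(m s² + s) + (d² + d)` vanishes at `s = d = 0` and is nonnegative in general
(`excess_nonneg`), so the minimum is attained at the origin. -/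

/-- The excess of the norm over its value at the origin, in the coordinates `s = n₁ + n₂` and
`d = n₁ - n₂`, is nonnegative: `d (d + 1)` is a product of consecutive integers, and
`m s² + s ≥ s (s + 1)` is bounded below by another. -/
lemma excess_nonneg (m s d : ℤ) (hm : 1 ≤ m) : 0 ≤ (m * s ^ 2 + s) + (d ^ 2 + d) := by
  have consecutive (k : ℤ) : 0 ≤ k ^ 2 + k := by
    rcases le_or_gt 0 k with h | h
    · positivity
    · nlinarith
  nlinarith [consecutive s, consecutive d, mul_nonneg (sub_nonneg.2 hm) (sq_nonneg s)]


/-- For even `m ≥ 2`, the minimum over `(n₁,n₂) ∈ ℤ²` of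
`m(n₁+n₂+1/(2m))² + (n₁-n₂+1/2)²` is `(m+1)/(4m)`, attained at `(0,0)`. -/
theorem minimal_norm_in_coset (m : ℕ) (hm : 2 ≤ m) (hme : Even m) :
    IsLeast
      {x : ℝ | ∃ n₁ n₂ : ℤ,
        x = (m : ℝ) * ((n₁ : ℝ) + (n₂ : ℝ) + 1 / (2 * (m : ℝ))) ^ 2 +
          ((n₁ : ℝ) - (n₂ : ℝ) + 1 / 2) ^ 2}
      (((m : ℝ) + 1) / (4 * (m : ℝ))) ∧
    (m : ℝ) * ((0 : ℝ) + (0 : ℝ) + 1 / (2 * (m : ℝ))) ^ 2 +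
        ((0 : ℝ) - (0 : ℝ) + 1 / 2) ^ 2 = ((m : ℝ) + 1) / (4 * (m : ℝ)) := by
  have hm0 : (m : ℝ) ≠ 0 := by
    have : m ≠ 0 := by omega
    exact_mod_cast this
  have h0 : (m : ℝ) * ((0 : ℝ) + (0 : ℝ) + 1 / (2 * (m : ℝ))) ^ 2 +
      ((0 : ℝ) - (0 : ℝ) + 1 / 2) ^ 2 = ((m : ℝ) + 1) / (4 * (m : ℝ)) := by
    field_simp
    ring
  refine ⟨⟨⟨0, 0, by simpa using h0.symm⟩, ?_⟩, h0⟩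
  rintro x ⟨a, b, rfl⟩
  have hex : (0 : ℝ) ≤ ((m : ℝ) * ((a : ℝ) + b) ^ 2 + ((a : ℝ) + b)) +
      (((a : ℝ) - b) ^ 2 + ((a : ℝ) - b)) := by
    exact_mod_cast excess_nonneg m (a + b) (a - b) (by omega)
  have key : (m : ℝ) * ((a : ℝ) + b + 1 / (2 * (m : ℝ))) ^ 2 + ((a : ℝ) - b + 1 / 2) ^ 2 =
      ((m : ℝ) + 1) / (4 * (m : ℝ)) + (((m : ℝ) * ((a : ℝ) + b) ^ 2 + ((a : ℝ) + b)) +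
        (((a : ℝ) - b) ^ 2 + ((a : ℝ) - b))) := by
    field_simp
    ring
  rw [key]
  linarith
end
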